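/- Let X be an integrable real random variable and U an integrable real random variable on a probability space (Ω, 𝓕, ℙ), and let c ∈ ℝ. If E[(X − c·U)·Complex.exp(i·ω·U)] = 0 for every ω ∈ ℝ, then E[X | σ(U)] = c·U almost surely. -/

import Mathlib

/-!
If `Y` is integrable and orthogonal to `exp (i L(U))` for every continuous linear functional `L`,
then the finite measures `Y⁺ μ` and `Y⁻ μ`, pushed forward along `U`, have the same characteristic
function and are therefore equal. Evaluated on a Borel set `s`, this says that `Y` integrates to zero over
`U ⁻¹' s`, i.e. over every event of `σ(U)`, so `E[Y | σ(U)] = 0`. Take `Y = X - Z` with `Z = c U`.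
-/

open MeasureTheory ProbabilityTheory

section

variable {Ω E : Type*} {mΩ : MeasurableSpace Ω} {μ : Measure Ω}
  [NormedAddCommGroup E] [NormedSpace ℝ E] [MeasurableSpace E] {U : Ω → E} {Y : Ω → ℝ}

lemma integrable_ofReal_mul_cexp_mul_I {V : Ω → ℝ} (hV : AEMeasurable V μ) (hY : Integrable Y μ) :
    Integrable (fun a ↦ (Y a : ℂ) * Complex.exp (V a * Complex.I)) μ :=
  hY.ofReal.mul_bdd (c := 1) (by fun_prop)
    (.of_forall fun a ↦ (Complex.norm_exp_ofReal_mul_I (V a)).le)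

lemma charFunDual_map_withDensity_ofReal [OpensMeasurableSpace E] (hU : AEMeasurable U μ)
    (hY : AEMeasurable Y μ) (L : StrongDual ℝ E) :
    charFunDual ((μ.withDensity fun a ↦ ENNReal.ofReal (Y a)).map U) L =
      ∫ a, ((max (Y a) 0 : ℝ) : ℂ) * Complex.exp (L (U a) * Complex.I) ∂μ := by
  rw [charFunDual_apply,
    integral_map (hU.mono_ac (withDensity_absolutelyContinuous _ _)) (by fun_prop),
    integral_withDensity_eq_integral_toReal_smul₀ hY.ennreal_ofReal
      (.of_forall fun _ ↦ ENNReal.ofReal_lt_top)]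
  simp only [ENNReal.toReal_ofReal', Complex.real_smul]

variable [BorelSpace E] [SecondCountableTopology E] [CompleteSpace E]

lemma map_withDensity_ofReal_eq_neg_of_forall_integral_mul_cexp_eq_zero
    (hU : AEMeasurable U μ) (hY : Integrable Y μ)
    (h : ∀ L : StrongDual ℝ E, ∫ a, (Y a : ℂ) * Complex.exp (L (U a) * Complex.I) ∂μ = 0) :
    (μ.withDensity fun a ↦ ENNReal.ofReal (Y a)).map U =
      (μ.withDensity fun a ↦ ENNReal.ofReal (-Y a)).map U := by
  have := isFiniteMeasure_withDensity_ofReal hY.2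
  have : IsFiniteMeasure (μ.withDensity fun a ↦ ENNReal.ofReal (-Y a)) :=
    isFiniteMeasure_withDensity_ofReal hY.neg.2
  refine Measure.ext_of_charFunDual (funext fun L ↦ ?_)
  have hLU : AEMeasurable (fun a ↦ L (U a)) μ := by fun_prop
  rw [charFunDual_map_withDensity_ofReal hU hY.aemeasurable,
    charFunDual_map_withDensity_ofReal hU hY.aemeasurable.fun_neg, ← sub_eq_zero]
  calc
    _ = ∫ a, ((max (Y a) 0 : ℝ) : ℂ) * Complex.exp (L (U a) * Complex.I)
          - ((max (-Y a) 0 : ℝ) : ℂ) * Complex.exp (L (U a) * Complex.I) ∂μ :=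
      (integral_sub (integrable_ofReal_mul_cexp_mul_I hLU hY.pos_part)
        (integrable_ofReal_mul_cexp_mul_I hLU hY.neg_part)).symm
    _ = ∫ a, (Y a : ℂ) * Complex.exp (L (U a) * Complex.I) ∂μ := by
      simp only [← sub_mul, ← Complex.ofReal_sub,
        max_zero_sub_max_neg_zero_eq_self]
    _ = 0 := h L

lemma setIntegral_preimage_eq_zero_of_forall_integral_mul_cexp_eq_zero
    (hU : AEMeasurable U μ) (hY : Integrable Y μ)
    (h : ∀ L : StrongDual ℝ E, ∫ a, (Y a : ℂ) * Complex.exp (L (U a) * Complex.I) ∂μ = 0)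
    {s : Set E} (hs : MeasurableSet s) : ∫ a in U ⁻¹' s, Y a ∂μ = 0 := by
  have hmap (f : Ω → ℝ) : (μ.withDensity fun a ↦ ENNReal.ofReal (f a)).map U s =
      ∫⁻ a in U ⁻¹' s, ENNReal.ofReal (f a) ∂μ := by
    rw [Measure.map_apply_of_aemeasurable
        (hU.mono_ac (withDensity_absolutelyContinuous _ _)) hs,
      withDensity_apply₀ _ (hU.nullMeasurableSet_preimage hs)]
  have hparts : ∫⁻ a in U ⁻¹' s, ENNReal.ofReal (Y a) ∂μ =
      ∫⁻ a in U ⁻¹' s, ENNReal.ofReal (-Y a) ∂μ := by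
    rw [← hmap Y, ← hmap fun a ↦ -Y a,
      map_withDensity_ofReal_eq_neg_of_forall_integral_mul_cexp_eq_zero hU hY h]
  rw [integral_eq_lintegral_pos_part_sub_lintegral_neg_part hY.integrableOn, hparts, sub_self]

lemma condExp_comap_ae_eq_zero_of_forall_integral_mul_cexp_eq_zero
    (hU : Measurable U) [SigmaFinite (μ.trim hU.comap_le)] (hY : Integrable Y μ)
    (h : ∀ L : StrongDual ℝ E, ∫ a, (Y a : ℂ) * Complex.exp (L (U a) * Complex.I) ∂μ = 0) :
    μ[Y | MeasurableSpace.comap U inferInstance] =ᵐ[μ] 0 := by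
  refine (ae_eq_condExp_of_forall_setIntegral_eq hU.comap_le hY
    (fun _ _ _ ↦ integrableOn_zero) ?_ aestronglyMeasurable_zero).symm
  rintro _ ⟨s, hs, rfl⟩ -
  rw [setIntegral_preimage_eq_zero_of_forall_integral_mul_cexp_eq_zero hU.aemeasurable hY h hs]
  exact integral_zero _ _

theorem stmt17_general {X Z : Ω → ℝ} (hU : Measurable U) [SigmaFinite (μ.trim hU.comap_le)]
    (hX : Integrable X μ) (hZ : Integrable Z μ)
    (hZU : AEStronglyMeasurable[MeasurableSpace.comap U inferInstance] Z μ)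
    (h : ∀ L : StrongDual ℝ E,
      ∫ a, ((X a - Z a : ℝ) : ℂ) * Complex.exp (L (U a) * Complex.I) ∂μ = 0) :
    μ[X | MeasurableSpace.comap U inferInstance] =ᵐ[μ] Z := by
  have hsub := condExp_sub hX hZ (MeasurableSpace.comap U inferInstance)
  have hZ_self := condExp_of_aestronglyMeasurable' hU.comap_le hZU hZ
  have hzero := condExp_comap_ae_eq_zero_of_forall_integral_mul_cexp_eq_zero hU (hX.sub hZ) h
  filter_upwards [hsub, hZ_self, hzero] with a hsub_a hZ_a hzero_a
  rw [hzero_a, Pi.sub_apply, hZ_a] at hsub_a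
  exact sub_eq_zero.mp hsub_a.symm

end

lemma I_mul_apply_one_mul_eq_apply_mul_I (L : StrongDual ℝ ℝ) (u : ℝ) :
    Complex.I * L 1 * u = L u * Complex.I := by
  have hL : L u = L 1 * u := (Dual.apply_one_mul_eq L.toLinearMap u).symm
  rw [hL, Complex.ofReal_mul]
  ring

theorem stmt17
    {Ω : Type*} [MeasureSpace Ω] [IsProbabilityMeasure (ℙ : Measure Ω)]
    (X U : Ω → ℝ) (hXmeas : Measurable X) (hUmeas : Measurable U)
    (hX1 : Integrable X ℙ) (hU1 : Integrable U ℙ)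
    (c : ℝ)
    (hfour : ∀ ω : ℝ,
      ∫ ω', ((X ω' - c * U ω' : ℝ) : ℂ) * Complex.exp (Complex.I * ω * U ω') = 0) :
    ℙ[X | MeasurableSpace.comap U inferInstance] =ᵐ[ℙ] fun ω => c * U ω :=
  stmt17_general hUmeas hX1 (hU1.const_mul c)
    ((comap_measurable U).const_mul c).aestronglyMeasurable fun L ↦ by
      simpa only [I_mul_apply_one_mul_eq_apply_mul_I] using hfour (L 1)
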